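/- Let G = (A, B, E) be a bipartite graph, let k be a nonnegative integer, and let T_1, …, T_p be the twin classes of G. For every i, let T_i' be a subset of T_i with T_i' = T_i if |T_i| ≤ k+1 and |T_i'| = k+1 otherwise. Then G has an A-partitioning cover of cost at most k if and only if the induced subgraph G[T_1' ∪ … ∪ T_p'] has an A-partitioning cover (with respect to its side A ∩ (T_1' ∪ … ∪ T_p')) of cost at most k. -/

import Mathlib

/- Common framework: bipartite graphs on vertex set `ℕ` with side labels,
   edge editions, vertex splittings, and the bicluster-editing numbers. -/

namespace BCE

/-- A graph on a finite subset of `ℕ` equipped with a labelling of its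
vertices into two sides `A` and `B`. -/
structure BGraph where
  A : Set ℕ
  B : Set ℕ
  finA : A.Finite
  finB : B.Finite
  Adj : ℕ → ℕ → Prop
  symm : ∀ u v, Adj u v → Adj v u

/-- The vertex set of a graph. -/
def verts (G : BGraph) : Set ℕ := G.A ∪ G.B

/-- The open neighbourhood of a vertex. -/
def nbhd (G : BGraph) (v : ℕ) : Set ℕ := {u | G.Adj v u}

/-- `G = (A, B, E)` is bipartite: the sides are disjoint and every edge joins
a vertex of `A` with a vertex of `B`. -/
def Bipartite (G : BGraph) : Prop :=
  Disjoint G.A G.B ∧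
    ∀ u v, G.Adj u v → (u ∈ G.A ∧ v ∈ G.B) ∨ (u ∈ G.B ∧ v ∈ G.A)

/-- A (bipartite) graph is a disjoint union of bicliques iff whenever
`a-b-c-d` is a walk, `a` and `d` are adjacent (equivalently, every connected
component is a complete bipartite graph). -/
def IsBicliqueUnion (G : BGraph) : Prop :=
  ∀ a b c d, G.Adj a b → G.Adj b c → G.Adj c d → G.Adj a d

/-- The editing operations: deletion of an edge, addition of an edge, and
splitting of a vertex `v` into `v` and a fresh vertex `v'` whose
neighbourhoods `N1`, `N2` cover the neighbourhood of `v`. -/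
inductive Op where
  | del : ℕ → ℕ → Op
  | add : ℕ → ℕ → Op
  | split : ℕ → ℕ → Set ℕ → Set ℕ → Op

/-- `op` is a vertex splitting. -/
def IsSplitOp : Op → Prop
  | Op.split _ _ _ _ => True
  | _ => False

/-- `OpStep sA sB op G G'` : performing the single operation `op` on `G`
yields `G'`; vertex splittings are allowed on side `A` (resp. `B`) only if
`sA` (resp. `sB`) is `true`.  A copy created by a splitting is put on the
same side as the split vertex. -/
inductive OpStep (sA sB : Bool) : Op → BGraph → BGraph → Prop where
  | del {G G' : BGraph} {u v : ℕ}
      (h : G.Adj u v) (hA : G'.A = G.A) (hB : G'.B = G.B)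
      (hadj : ∀ x y, G'.Adj x y ↔
        (G.Adj x y ∧ ¬((x = u ∧ y = v) ∨ (x = v ∧ y = u)))) :
      OpStep sA sB (Op.del u v) G G'
  | add {G G' : BGraph} {u v : ℕ}
      (hu : u ∈ G.A) (hv : v ∈ G.B) (h : ¬ G.Adj u v)
      (hA : G'.A = G.A) (hB : G'.B = G.B)
      (hadj : ∀ x y, G'.Adj x y ↔
        (G.Adj x y ∨ (x = u ∧ y = v) ∨ (x = v ∧ y = u))) :
      OpStep sA sB (Op.add u v) G G'
  | split {G G' : BGraph} {v v' : ℕ} {N1 N2 : Set ℕ}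
      (hside : (v ∈ G.A ∧ sA = true) ∨ (v ∈ G.B ∧ sB = true))
      (hfresh : v' ∉ verts G)
      (hcover : N1 ∪ N2 = nbhd G v)
      (hA : v ∈ G.A → G'.A = insert v' G.A ∧ G'.B = G.B)
      (hB : v ∈ G.B → G'.A = G.A ∧ G'.B = insert v' G.B)
      (hadj : ∀ x y, G'.Adj x y ↔
        ((G.Adj x y ∧ x ≠ v ∧ y ≠ v) ∨ (x = v ∧ y ∈ N1) ∨ (y = v ∧ x ∈ N1) ∨
          (x = v' ∧ y ∈ N2) ∨ (y = v' ∧ x ∈ N2))) :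
      OpStep sA sB (Op.split v v' N1 N2) G G'

/-- `ApplySeq sA sB L G G'` : applying the sequence of operations `L`
to `G` yields `G'`. -/
def ApplySeq (sA sB : Bool) : List Op → BGraph → BGraph → Prop
  | [], G, G' => G' = G
  | op :: L, G, G'' => ∃ G', OpStep sA sB op G G' ∧ ApplySeq sA sB L G' G''

/-- The sequence `L` transforms `G` into a disjoint union of bicliques. -/
def Solves (sA sB : Bool) (L : List Op) (G : BGraph) : Prop :=
  ∃ G', ApplySeq sA sB L G G' ∧ IsBicliqueUnion G'

/-- `bcevs G` : the minimum length of a sequence of edge editions and vertex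
splittings transforming `G` into a disjoint union of bicliques. -/
noncomputable def bcevs (G : BGraph) : ℕ :=
  sInf {n | ∃ L, L.length = n ∧ Solves true true L G}

/-- `bceovs G` (that is, `bceovs(G, A)`) : the minimum length of such a
sequence in which vertex splittings are applied only to vertices of the side
`A` (and their copies, which are also on side `A`). -/
noncomputable def bceovs (G : BGraph) : ℕ :=
  sInf {n | ∃ L, L.length = n ∧ Solves true false L G}

/-- The subgraph of `G` induced by `S`. -/
def induce (G : BGraph) (S : Set ℕ) : BGraph where
  A := G.A ∩ S
  B := G.B ∩ S
  finA := G.finA.subset Set.inter_subset_left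
  finB := G.finB.subset Set.inter_subset_left
  Adj := fun u v => G.Adj u v ∧ u ∈ S ∧ v ∈ S
  symm := fun u v h => ⟨G.symm u v h.1, h.2.2, h.2.1⟩

/-- `G` is a tree (as an abstract graph on its vertex set). -/
def IsTreeB (G : BGraph) : Prop :=
  (SimpleGraph.induce (verts G) (SimpleGraph.fromRel G.Adj)).IsTree

/-- `G` is connected. -/
def ConnectedB (G : BGraph) : Prop :=
  (SimpleGraph.induce (verts G) (SimpleGraph.fromRel G.Adj)).Connected

/-- The set `S` induces a biclique in `G`: every vertex of `S` on side `A` is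
adjacent to every vertex of `S` on side `B`. -/
def IsBicliqueOn (G : BGraph) (S : Set ℕ) : Prop :=
  ∀ u ∈ S ∩ G.A, ∀ v ∈ S ∩ G.B, G.Adj u v

/-- The set `S` induces a star in `G`: some centre `c ∈ S` is adjacent to all
other vertices of `S`, and every edge inside `S` uses the centre. -/
def IsStarOn (G : BGraph) (S : Set ℕ) : Prop :=
  ∃ c ∈ S, (∀ v ∈ S, v ≠ c → G.Adj c v) ∧
    (∀ u ∈ S, ∀ v ∈ S, G.Adj u v → u = c ∨ v = c)

/-- An `A`-partitioning cover of `G`: a collection of subsets of `A ∪ B`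
covering all vertices whose traces on `A` form a partition of `A` (every
vertex of `A` lies in a unique member of the collection). -/
def IsAPartCover (G : BGraph) (C : Set (Set ℕ)) : Prop :=
  (∀ X ∈ C, X ⊆ verts G) ∧
  (∀ v ∈ verts G, ∃ X ∈ C, v ∈ X) ∧
  (∀ a ∈ G.A, ∃! X, X ∈ C ∧ a ∈ X)

/-- The cost of an `A`-partitioning cover: each `a ∈ A` lying in the unique
set `X ∈ C` costs `|(B ∩ X) \ N(a)| + |N(a) \ X|`; each `b ∈ B` lying in `j`
members of `C` costs `j - 1`. -/
noncomputable def coverCost (G : BGraph) (C : Set (Set ℕ)) : ℕ :=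
  (∑ᶠ a ∈ G.A, ∑ᶠ X ∈ {X ∈ C | a ∈ X},
      (((G.B ∩ X) \ nbhd G a).ncard + ((nbhd G a) \ X).ncard)) +
  ∑ᶠ b ∈ G.B, ({X ∈ C | b ∈ X}.ncard - 1)

/-- The twin class of a vertex: all vertices of `G` with the same open
neighbourhood. -/
def twinClass (G : BGraph) (v : ℕ) : Set ℕ :=
  {u ∈ verts G | nbhd G u = nbhd G v}

/-- The twin classes of `G`. -/
def twinClasses (G : BGraph) : Set (Set ℕ) :=
  {T | ∃ v ∈ verts G, T = twinClass G v}

/-- A cover is twin-adapted if every member contains each twin class either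
entirely or not at all. -/
def TwinAdapted (G : BGraph) (C : Set (Set ℕ)) : Prop :=
  ∀ T ∈ twinClasses G, ∀ X ∈ C, T ∩ X = ∅ ∨ T ⊆ X

/-- `G` is a cycle with consecutive vertices `p 0, p 1, …, p (m-1)`
(indices modulo `m`), the vertices of even index forming side `A`. -/
def IsCycleWith (G : BGraph) (p : ℕ → ℕ) (m : ℕ) : Prop :=
  (∀ i j, i < m → j < m → p i = p j → i = j) ∧
  G.A = p '' {i | i < m ∧ i % 2 = 0} ∧
  G.B = p '' {i | i < m ∧ i % 2 = 1} ∧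
  (∀ x y, G.Adj x y ↔ ∃ i < m,
    (x = p i ∧ y = p ((i + 1) % m)) ∨ (y = p i ∧ x = p ((i + 1) % m)))

/-- `G` is a path with `l` edges and consecutive vertices `p 0, …, p l`,
the vertices of even index forming side `A`. -/
def IsPathWith (G : BGraph) (p : ℕ → ℕ) (l : ℕ) : Prop :=
  (∀ i j, i ≤ l → j ≤ l → p i = p j → i = j) ∧
  G.A = p '' {i | i ≤ l ∧ i % 2 = 0} ∧
  G.B = p '' {i | i ≤ l ∧ i % 2 = 1} ∧
  (∀ x y, G.Adj x y ↔ ∃ i < l,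
    (x = p i ∧ y = p (i + 1)) ∨ (y = p i ∧ x = p (i + 1)))

end BCE

namespace BCE

/-- Some member of `C` contains both `a` and `b`. -/
def Together (C : Set (Set ℕ)) (a b : ℕ) : Prop := ∃ X ∈ C, a ∈ X ∧ b ∈ X

/-- The pair `a`, `b` has to be edited for the cover `C`. -/
def Mismatch (G : BGraph) (C : Set (Set ℕ)) (a b : ℕ) : Prop :=
  ¬(Together C a b ↔ G.Adj a b)

/-- The number of members of `C` containing `b`. -/
noncomputable def mult (C : Set (Set ℕ)) (b : ℕ) : ℕ := {X ∈ C | b ∈ X}.ncard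

theorem Bipartite.nbhd_subset {G : BGraph} (h : Bipartite G) {a : ℕ} (ha : a ∈ G.A) :
    nbhd G a ⊆ G.B := by
  intro b hb
  rcases h.2 a b hb with h' | h'
  · exact h'.2
  · exact absurd h'.1 (Set.disjoint_left.mp h.1 ha)

theorem Bipartite.induce {G : BGraph} (h : Bipartite G) (S : Set ℕ) :
    Bipartite (induce G S) := by
  refine ⟨h.1.mono Set.inter_subset_left Set.inter_subset_left, ?_⟩
  rintro u v ⟨huv, hu, hv⟩
  rcases h.2 u v huv with h' | h'
  · exact Or.inl ⟨⟨h'.1, hu⟩, ⟨h'.2, hv⟩⟩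
  · exact Or.inr ⟨⟨h'.1, hu⟩, ⟨h'.2, hv⟩⟩

theorem verts_finite (G : BGraph) : (verts G).Finite := G.finA.union G.finB

theorem IsAPartCover.finite {G : BGraph} {C : Set (Set ℕ)} (h : IsAPartCover G C) :
    C.Finite :=
  (verts_finite G).finite_subsets.subset h.1

open Classical in
theorem coverCost_eq_sum {G : BGraph} (hbip : Bipartite G) {C : Set (Set ℕ)}
    (hC : IsAPartCover G C) :
    coverCost G C =
      (∑ a ∈ G.finA.toFinset, ∑ b ∈ G.finB.toFinset, if Mismatch G C a b then 1 else 0) +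
        ∑ b ∈ G.finB.toFinset, (mult C b - 1) := by
  unfold coverCost
  rw [finsum_mem_eq_finite_toFinset_sum _ G.finA, finsum_mem_eq_finite_toFinset_sum _ G.finB]
  congr 1
  refine Finset.sum_congr rfl fun a ha => ?_
  have haA : a ∈ G.A := by simpa using ha
  obtain ⟨X, ⟨hXC, haX⟩, huniq⟩ := hC.2.2 a haA
  have hsing : {Y | Y ∈ C ∧ a ∈ Y} = {X} :=
    Set.eq_singleton_iff_unique_mem.mpr ⟨⟨hXC, haX⟩, fun Y hY => huniq Y hY⟩
  have htog : ∀ b, Together C a b ↔ b ∈ X := by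
    refine fun b => ⟨?_, fun hb => ⟨X, hXC, haX, hb⟩⟩
    rintro ⟨Y, hY, haY, hbY⟩
    rwa [← huniq Y ⟨hY, haY⟩]
  have hN := hbip.nbhd_subset haA
  rw [hsing, finsum_mem_singleton, ← Finset.card_filter, ← Set.ncard_coe_finset,
    ← Set.ncard_union_eq _ (G.finB.subset fun b hb => hb.1.1)
      (G.finB.subset fun b hb => hN hb.1)]
  · congr 1
    ext b
    have hNb : G.Adj a b → b ∈ G.B := fun hb => hN hb
    simp only [Mismatch, htog, nbhd, Set.mem_union, Set.mem_sdiff, Set.mem_inter_iff,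
      Set.mem_ofPred_eq, Finset.coe_filter, Set.Finite.mem_toFinset]
    tauto
  · exact Set.disjoint_left.mpr fun b hb hb' => hb.2 hb'.1

/-- A cover of `G` restricts to a cover of an induced subgraph without increasing the cost. -/
theorem exists_cover_induce {G : BGraph} (hbip : Bipartite G) (S : Set ℕ)
    {C : Set (Set ℕ)} (hC : IsAPartCover G C) :
    ∃ C', IsAPartCover (induce G S) C' ∧ coverCost (induce G S) C' ≤ coverCost G C := by
  classical
  have hcov : IsAPartCover (induce G S) ((· ∩ S) '' C) := by
    refine ⟨?_, ?_, ?_⟩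
    · rintro _ ⟨X, hX, rfl⟩ v ⟨hvX, hvS⟩
      exact (hC.1 X hX hvX).imp (⟨·, hvS⟩) (⟨·, hvS⟩)
    · intro v hv
      have hv' : v ∈ verts G ∧ v ∈ S := by
        rcases hv with hv | hv
        · exact ⟨Or.inl hv.1, hv.2⟩
        · exact ⟨Or.inr hv.1, hv.2⟩
      obtain ⟨X, hX, hvX⟩ := hC.2.1 v hv'.1
      exact ⟨X ∩ S, ⟨X, hX, rfl⟩, hvX, hv'.2⟩
    · rintro a ⟨haA, haS⟩
      obtain ⟨X, ⟨hX, haX⟩, huniq⟩ := hC.2.2 a haA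
      refine ⟨X ∩ S, ⟨⟨X, hX, rfl⟩, haX, haS⟩, ?_⟩
      rintro _ ⟨⟨Y, hY, rfl⟩, haY, -⟩
      rw [huniq Y ⟨hY, haY⟩]
  refine ⟨_, hcov, ?_⟩
  rw [coverCost_eq_sum (hbip.induce S) hcov, coverCost_eq_sum hbip hC]
  have hA : (induce G S).finA.toFinset ⊆ G.finA.toFinset :=
    Set.Finite.toFinset_mono Set.inter_subset_left
  have hB : (induce G S).finB.toFinset ⊆ G.finB.toFinset :=
    Set.Finite.toFinset_mono Set.inter_subset_left
  refine add_le_add ?_ ?_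
  · refine (Finset.sum_le_sum fun a ha => ?_).trans (Finset.sum_le_sum_of_subset hA)
    refine (Finset.sum_le_sum fun b hb => ?_).trans (Finset.sum_le_sum_of_subset hB)
    have haS : a ∈ S := ((Set.Finite.mem_toFinset _).mp ha).2
    have hbS : b ∈ S := ((Set.Finite.mem_toFinset _).mp hb).2
    have : Mismatch (induce G S) ((· ∩ S) '' C) a b ↔ Mismatch G C a b := by
      simp [Mismatch, Together, induce, haS, hbS]
    simp [this]
  · refine (Finset.sum_le_sum fun b hb => ?_).trans (Finset.sum_le_sum_of_subset hB)
    refine Nat.sub_le_sub_right ?_ 1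
    have : {Y | Y ∈ (· ∩ S) '' C ∧ b ∈ Y} ⊆ (· ∩ S) '' {X | X ∈ C ∧ b ∈ X} := by
      rintro _ ⟨⟨X, hX, rfl⟩, hb, -⟩
      exact ⟨X, ⟨hX, hb⟩, rfl⟩
    have hfin : {X | X ∈ C ∧ b ∈ X}.Finite := hC.finite.subset fun X hX => hX.1
    exact (Set.ncard_le_ncard this (hfin.image _)).trans (Set.ncard_image_le hfin)

/-- A subset of `A` with more elements than the cost of a cover contains a vertex at which
no cost is incurred. -/
theorem exists_free_left {G : BGraph} (hbip : Bipartite G) {C : Set (Set ℕ)}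
    (hC : IsAPartCover G C) {U : Set ℕ} (hU : U ⊆ G.A) (hcard : coverCost G C < U.ncard) :
    ∃ u ∈ U, ∀ b ∈ G.B, ¬Mismatch G C u b := by
  classical
  by_contra! hcon
  have hfin : U.Finite := G.finA.subset hU
  have hsum : hfin.toFinset.card ≤
      ∑ a ∈ hfin.toFinset, ∑ b ∈ G.finB.toFinset, if Mismatch G C a b then 1 else 0 := by
    rw [Finset.card_eq_sum_ones]
    refine Finset.sum_le_sum fun a ha => ?_
    obtain ⟨b, hb, hab⟩ := hcon a (by simpa using ha)
    rw [← Finset.card_filter]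
    exact Finset.card_pos.mpr ⟨b, by simp [hb, hab]⟩
  have hle := hsum.trans (Finset.sum_le_sum_of_subset (Set.Finite.toFinset_mono hU
    (ht := G.finA)))
  rw [coverCost_eq_sum hbip hC, Set.ncard_eq_toFinset_card U hfin] at hcard
  omega

/-- A subset of `B` with more elements than the cost of a cover contains a vertex at which no
cost is incurred. -/
theorem exists_free_right {G : BGraph} (hbip : Bipartite G) {C : Set (Set ℕ)}
    (hC : IsAPartCover G C) {U : Set ℕ} (hU : U ⊆ G.B) (hcard : coverCost G C < U.ncard) :
    ∃ u ∈ U, (∀ a ∈ G.A, ¬Mismatch G C a u) ∧ mult C u ≤ 1 := by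
  classical
  by_contra! hcon
  have hfin : U.Finite := G.finB.subset hU
  have hsum : hfin.toFinset.card ≤ ∑ b ∈ hfin.toFinset,
      ((∑ a ∈ G.finA.toFinset, if Mismatch G C a b then 1 else 0) + (mult C b - 1)) := by
    rw [Finset.card_eq_sum_ones]
    refine Finset.sum_le_sum fun b hb => ?_
    rw [← Finset.card_filter]
    by_cases h : ∀ a ∈ G.A, ¬Mismatch G C a b
    · have := hcon b (by simpa using hb) h
      omega
    · push Not at h
      obtain ⟨a, ha, hab⟩ := h
      have : 0 < (G.finA.toFinset.filter fun a => Mismatch G C a b).card :=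
        Finset.card_pos.mpr ⟨a, by simp [ha, hab]⟩
      omega
  have hle := hsum.trans (Finset.sum_le_sum_of_subset (Set.Finite.toFinset_mono hU
    (ht := G.finB)))
  rw [Finset.sum_add_distrib, Finset.sum_comm] at hle
  rw [coverCost_eq_sum hbip hC, Set.ncard_eq_toFinset_card U hfin] at hcard
  omega

/-- `u` is a vertex of `S` that is a twin of `v` on the same side of `G`; if `v ∉ S`, then
the cover `C` of the subgraph induced by `S` incurs no cost at `u`. -/
structure IsFreeTwin (G : BGraph) (S : Set ℕ) (C : Set (Set ℕ)) (v u : ℕ) : Prop where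
  mem : u ∈ S
  left : v ∈ G.A → u ∈ G.A
  right : v ∈ G.B → u ∈ G.B
  nbhd_eq : nbhd G u = nbhd G v
  eq_self : v ∈ S → u = v
  free_left : v ∉ S → v ∈ G.A → ∀ b ∈ G.B ∩ S, ¬Mismatch (induce G S) C u b
  free_right : v ∉ S → v ∈ G.B → ∀ a ∈ G.A ∩ S, ¬Mismatch (induce G S) C a u
  mult_le : v ∉ S → v ∈ G.B → mult C u ≤ 1

/-- The vertices of `W` whose representative under `ρ` lies in `X`. -/
def pull (W : Set ℕ) (ρ : ℕ → ℕ) (X : Set ℕ) : Set ℕ := {v ∈ W | ρ v ∈ X}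

/-- The pullbacks of the members of `C` together with the singletons of `I`. -/
def extend (C : Set (Set ℕ)) (W I : Set ℕ) (ρ : ℕ → ℕ) : Set (Set ℕ) :=
  pull W ρ '' C ∪ (fun v => {v}) '' I

theorem mem_extend_and_mem_iff {C : Set (Set ℕ)} {W I : Set ℕ} {ρ : ℕ → ℕ}
    {v : ℕ} (hW : v ∈ W) (hI : v ∉ I) {Y : Set ℕ} :
    (Y ∈ extend C W I ρ ∧ v ∈ Y) ↔ ∃ X ∈ C, ρ v ∈ X ∧ pull W ρ X = Y := by
  constructor
  · rintro ⟨⟨X, hX, rfl⟩ | ⟨w, hw, rfl⟩, hv⟩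
    · exact ⟨X, hX, hv.2, rfl⟩
    · exact absurd (Set.mem_singleton_iff.mp hv ▸ hw) hI
  · rintro ⟨X, hX, hv, rfl⟩
    exact ⟨Or.inl ⟨X, hX, rfl⟩, hW, hv⟩

theorem mem_extend_and_mem_iff_of_mem {C : Set (Set ℕ)} {W I : Set ℕ} {ρ : ℕ → ℕ}
    {v : ℕ} (hW : v ∉ W) (hI : v ∈ I) {Y : Set ℕ} :
    (Y ∈ extend C W I ρ ∧ v ∈ Y) ↔ Y = {v} := by
  constructor
  · rintro ⟨⟨X, hX, rfl⟩ | ⟨w, hw, rfl⟩, hv⟩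
    · exact absurd hv.1 hW
    · rw [Set.mem_singleton_iff.mp hv]
  · rintro rfl
    exact ⟨Or.inr ⟨v, hI, rfl⟩, rfl⟩

/-- A cover of an induced subgraph extends without increasing the cost, if the missing
vertices are isolated or have twins in the subgraph on which no cost is incurred. -/
theorem exists_cover_extend {G : BGraph} (hbip : Bipartite G) {S : Set ℕ}
    {C : Set (Set ℕ)} (hC : IsAPartCover (induce G S) C)
    (htwin : ∀ v ∈ verts G, (v ∉ S ∧ nbhd G v = ∅) ∨ ∃ u, IsFreeTwin G S C v u) :
    ∃ D, IsAPartCover G D ∧ coverCost G D ≤ coverCost (induce G S) C := by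
  classical
  set I : Set ℕ := {v ∈ verts G | v ∉ S ∧ nbhd G v = ∅}
  set W : Set ℕ := verts G \ I
  have hex : ∀ v, ∃ u, v ∈ W → IsFreeTwin G S C v u := by
    intro v
    by_cases hv : v ∈ W
    · rcases htwin v hv.1 with h | ⟨u, hu⟩
      · exact absurd ⟨hv.1, h⟩ hv.2
      · exact ⟨u, fun _ => hu⟩
    · exact ⟨v, fun h => absurd h hv⟩
  choose ρ hρ using hex
  have hIW : ∀ v ∈ verts G, v ∉ I → v ∈ W := fun v hv hI => ⟨hv, hI⟩
  have hSI : ∀ v ∈ S, v ∉ I := fun v hv hI => hI.2.1 hv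
  have hρverts : ∀ v ∈ W, ρ v ∈ verts (induce G S) := fun v hv =>
    hv.1.imp (fun h => ⟨(hρ v hv).left h, (hρ v hv).mem⟩)
      (fun h => ⟨(hρ v hv).right h, (hρ v hv).mem⟩)
  have hcov : IsAPartCover G (extend C W I ρ) := by
    refine ⟨?_, ?_, ?_⟩
    · rintro _ (⟨X, hX, rfl⟩ | ⟨w, hw, rfl⟩)
      · exact fun v hv => hv.1.1
      · exact Set.singleton_subset_iff.mpr hw.1
    · intro v hv
      by_cases hI : v ∈ I
      · exact ⟨{v}, Or.inr ⟨v, hI, rfl⟩, rfl⟩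
      · obtain ⟨X, hX, hvX⟩ := hC.2.1 _ (hρverts v ⟨hv, hI⟩)
        exact ⟨pull W ρ X, Or.inl ⟨X, hX, rfl⟩, ⟨hv, hI⟩, hvX⟩
    · intro a ha
      by_cases hI : a ∈ I
      · simp only [mem_extend_and_mem_iff_of_mem (fun h : a ∈ W => h.2 hI) hI]
        exact ⟨{a}, rfl, fun _ h => h⟩
      · have haW := hIW a (Or.inl ha) hI
        obtain ⟨X, ⟨hX, haX⟩, huniq⟩ := hC.2.2 (ρ a) ⟨(hρ a haW).left ha, (hρ a haW).mem⟩
        simp only [mem_extend_and_mem_iff haW hI]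
        refine ⟨pull W ρ X, ⟨X, hX, haX, rfl⟩, ?_⟩
        rintro _ ⟨Y, hY, haY, rfl⟩
        rw [huniq Y ⟨hY, haY⟩]
  have hmis : ∀ a ∈ G.A, ∀ b ∈ G.B, Mismatch G (extend C W I ρ) a b →
      a ∈ W ∧ b ∈ W ∧ Mismatch (induce G S) C (ρ a) (ρ b) := by
    intro a ha b hb hab
    have hne : a ≠ b := fun h => Set.disjoint_left.mp hbip.1 ha (h ▸ hb)
    have htog : Together (extend C W I ρ) a b ↔
        a ∈ W ∧ b ∈ W ∧ Together C (ρ a) (ρ b) := by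
      constructor
      · rintro ⟨_, ⟨X, hX, rfl⟩ | ⟨w, hw, rfl⟩, haY, hbY⟩
        · exact ⟨haY.1, hbY.1, X, hX, haY.2, hbY.2⟩
        · exact absurd (Eq.trans haY (Eq.symm hbY)) hne
      · rintro ⟨haW, hbW, X, hX, haX, hbX⟩
        exact ⟨_, Or.inl ⟨X, hX, rfl⟩, ⟨haW, haX⟩, ⟨hbW, hbX⟩⟩
    have hadj : G.Adj a b → a ∉ I ∧ b ∉ I := fun h =>
      ⟨fun hI => (Set.ext_iff.mp hI.2.2 b).mp h,
        fun hI => (Set.ext_iff.mp hI.2.2 a).mp (G.symm _ _ h)⟩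
    have hW : a ∈ W ∧ b ∈ W := by
      by_contra hcon
      refine hab ⟨fun h => absurd ⟨(htog.mp h).1, (htog.mp h).2.1⟩ hcon, fun h => ?_⟩
      exact absurd ⟨hIW a (Or.inl ha) (hadj h).1, hIW b (Or.inr hb) (hadj h).2⟩ hcon
    have h1 : G.Adj (ρ a) (ρ b) ↔ G.Adj a (ρ b) :=
      Set.ext_iff.mp (hρ a hW.1).nbhd_eq (ρ b)
    have h2 : G.Adj (ρ b) a ↔ G.Adj b a := Set.ext_iff.mp (hρ b hW.2).nbhd_eq a
    have h3 : G.Adj (ρ a) (ρ b) ↔ G.Adj a b :=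
      h1.trans (⟨G.symm _ _, G.symm _ _⟩ : G.Adj a (ρ b) ↔ G.Adj (ρ b) a) |>.trans
        (h2.trans ⟨G.symm _ _, G.symm _ _⟩)
    refine ⟨hW.1, hW.2, fun h => hab ?_⟩
    rw [htog, ← h3]
    have : (induce G S).Adj (ρ a) (ρ b) ↔ G.Adj (ρ a) (ρ b) :=
      ⟨fun h => h.1, fun h => ⟨h, (hρ a hW.1).mem, (hρ b hW.2).mem⟩⟩
    rw [this] at h
    simp [hW, h]
  have hmisS : ∀ a ∈ G.A, ∀ b ∈ G.B, Mismatch G (extend C W I ρ) a b →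
      a ∈ S ∧ b ∈ S ∧ Mismatch (induce G S) C a b := by
    intro a ha b hb hab
    obtain ⟨haW, hbW, h⟩ := hmis a ha b hb hab
    have haS : a ∈ S := by
      by_contra hcon
      exact (hρ a haW).free_left hcon ha _ ⟨(hρ b hbW).right hb, (hρ b hbW).mem⟩ h
    have hbS : b ∈ S := by
      by_contra hcon
      exact (hρ b hbW).free_right hcon hb _ ⟨(hρ a haW).left ha, (hρ a haW).mem⟩ h
    rw [(hρ a haW).eq_self haS, (hρ b hbW).eq_self hbS] at h
    exact ⟨haS, hbS, h⟩
  have hmultW : ∀ b ∈ W, mult (extend C W I ρ) b ≤ mult C (ρ b) := by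
    intro b hb
    have hfin : {X | X ∈ C ∧ ρ b ∈ X}.Finite := hC.finite.subset fun X hX => hX.1
    have hsub : {Y | Y ∈ extend C W I ρ ∧ b ∈ Y} ⊆ pull W ρ '' {X | X ∈ C ∧ ρ b ∈ X} := by
      intro Y hY
      obtain ⟨X, hX, hbX, rfl⟩ := (mem_extend_and_mem_iff hb hb.2).mp hY
      exact ⟨X, ⟨hX, hbX⟩, rfl⟩
    exact (Set.ncard_le_ncard hsub (hfin.image _)).trans (Set.ncard_image_le hfin)
  have hmult : ∀ b ∈ G.B, b ∉ S → mult (extend C W I ρ) b ≤ 1 := by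
    intro b hb hbS
    by_cases hI : b ∈ I
    · unfold mult
      simp only [mem_extend_and_mem_iff_of_mem (fun h : b ∈ W => h.2 hI) hI]
      simp
    · have hbW := hIW b (Or.inr hb) hI
      exact (hmultW b hbW).trans ((hρ b hbW).mult_le hbS hb)
  refine ⟨_, hcov, ?_⟩
  rw [coverCost_eq_sum (hbip.induce S) hC, coverCost_eq_sum hbip hcov]
  have hA : (induce G S).finA.toFinset ⊆ G.finA.toFinset :=
    Set.Finite.toFinset_mono Set.inter_subset_left
  have hB : (induce G S).finB.toFinset ⊆ G.finB.toFinset :=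
    Set.Finite.toFinset_mono Set.inter_subset_left
  refine add_le_add ?_ ?_
  · rw [← Finset.sum_subset hA]
    · refine Finset.sum_le_sum fun a ha => ?_
      have haS : a ∈ G.A ∩ S := (Set.Finite.mem_toFinset _).mp ha
      rw [← Finset.sum_subset hB]
      · refine Finset.sum_le_sum fun b hb => ?_
        have hbS : b ∈ G.B ∩ S := (Set.Finite.mem_toFinset _).mp hb
        have := hmisS a haS.1 b hbS.1
        split_ifs <;> simp_all
      · intro b hb hb'
        rw [Set.Finite.mem_toFinset] at hb hb'
        exact if_neg fun h => hb' ⟨hb, (hmisS a haS.1 b hb h).2.1⟩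
    · intro a ha ha'
      rw [Set.Finite.mem_toFinset] at ha ha'
      refine Finset.sum_eq_zero fun b hb => ?_
      rw [Set.Finite.mem_toFinset] at hb
      exact if_neg fun h => ha' ⟨ha, (hmisS a ha b hb h).1⟩
  · rw [← Finset.sum_subset hB]
    · refine Finset.sum_le_sum fun b hb => Nat.sub_le_sub_right ?_ 1
      have hbS : b ∈ G.B ∩ S := (Set.Finite.mem_toFinset _).mp hb
      have hbW := hIW b (Or.inr hbS.1) (hSI b hbS.2)
      simpa [(hρ b hbW).eq_self hbS.2] using hmultW b hbW
    · intro b hb hb'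
      rw [Set.Finite.mem_toFinset] at hb hb'
      exact Nat.sub_eq_zero_of_le (hmult b hb fun h => hb' ⟨hb, h⟩)

theorem twinClass_subset_left {G : BGraph} (hbip : Bipartite G) {v : ℕ} (hv : v ∈ G.A)
    (hne : (nbhd G v).Nonempty) : twinClass G v ⊆ G.A := by
  rintro u ⟨-, hu⟩
  obtain ⟨w, hw⟩ := hne
  have hwB := hbip.nbhd_subset hv hw
  rw [← hu] at hw
  rcases hbip.2 u w hw with h | h
  · exact h.1
  · exact absurd hwB (Set.disjoint_left.mp hbip.1 h.2)

theorem twinClass_subset_right {G : BGraph} (hbip : Bipartite G) {v : ℕ} (hv : v ∈ G.B)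
    (hne : (nbhd G v).Nonempty) : twinClass G v ⊆ G.B := by
  rintro u ⟨-, hu⟩
  obtain ⟨w, hw⟩ := hne
  have hwA : w ∈ G.A := by
    rcases hbip.2 v w hw with h | h
    · exact absurd hv (Set.disjoint_left.mp hbip.1 h.1)
    · exact h.2
  rw [← hu] at hw
  exact hbip.nbhd_subset hwA (G.symm _ _ hw)

/-- Let `G = (A, B, E)` be a bipartite graph, `k ≥ 0`, and for
every twin class `T` of `G` let `sel T ⊆ T` with `sel T = T` if `|T| ≤ k+1`
and `|sel T| = k+1` otherwise.  Then `G` has an `A`-partitioning cover of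
cost at most `k` iff the subgraph induced by the union of the sets `sel T`
has one (with respect to its `A`-side). -/
theorem twin_class_reduction (G : BGraph) (hbip : Bipartite G) (k : ℕ)
    (sel : Set ℕ → Set ℕ)
    (hsub : ∀ T ∈ twinClasses G, sel T ⊆ T)
    (hsmall : ∀ T ∈ twinClasses G, T.ncard ≤ k + 1 → sel T = T)
    (hbig : ∀ T ∈ twinClasses G, k + 1 < T.ncard → (sel T).ncard = k + 1) :
    (∃ C, IsAPartCover G C ∧ coverCost G C ≤ k) ↔
    (∃ C, IsAPartCover (induce G (⋃ T ∈ twinClasses G, sel T)) C ∧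
      coverCost (induce G (⋃ T ∈ twinClasses G, sel T)) C ≤ k) := by
  set S := ⋃ T ∈ twinClasses G, sel T
  constructor
  · rintro ⟨C, hC, hcost⟩
    obtain ⟨C', hC', hle⟩ := exists_cover_induce hbip S hC
    exact ⟨C', hC', hle.trans hcost⟩
  · rintro ⟨C, hC, hcost⟩
    suffices htwin : ∀ v ∈ verts G, (v ∉ S ∧ nbhd G v = ∅) ∨ ∃ u, IsFreeTwin G S C v u by
      obtain ⟨D, hD, hle⟩ := exists_cover_extend hbip hC htwin
      exact ⟨D, hD, hle.trans hcost⟩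
    intro v hv
    by_cases hvS : v ∈ S
    · exact Or.inr ⟨v, hvS, id, id, rfl, fun _ => rfl, fun h => absurd hvS h,
        fun h => absurd hvS h, fun h => absurd hvS h⟩
    rcases Set.eq_empty_or_nonempty (nbhd G v) with hemp | hne
    · exact Or.inl ⟨hvS, hemp⟩
    right
    have hT : twinClass G v ∈ twinClasses G := ⟨v, hv, rfl⟩
    have hselS : sel (twinClass G v) ⊆ S := Set.subset_biUnion_of_mem (u := sel) hT
    have hvT : v ∈ twinClass G v := ⟨hv, rfl⟩
    have hlarge : k + 1 < (twinClass G v).ncard := by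
      by_contra hcon
      exact hvS (hselS ((hsmall _ hT (not_lt.mp hcon)).ge hvT))
    have hcard : coverCost (induce G S) C < (sel (twinClass G v)).ncard := by
      rw [hbig _ hT hlarge]
      omega
    rcases hv with hvA | hvB
    · have hTA := twinClass_subset_left hbip hvA hne
      obtain ⟨u, hu, hfree⟩ := exists_free_left (hbip.induce S) hC
        (fun u hu => ⟨hTA (hsub _ hT hu), hselS hu⟩) hcard
      have hvB : v ∉ G.B := Set.disjoint_left.mp hbip.1 hvA
      exact ⟨u, hselS hu, fun _ => hTA (hsub _ hT hu), fun h => absurd h hvB,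
        (hsub _ hT hu).2, fun h => absurd h hvS, fun _ _ => hfree,
        fun _ h => absurd h hvB, fun _ h => absurd h hvB⟩
    · have hTB := twinClass_subset_right hbip hvB hne
      obtain ⟨u, hu, hfree, hmult⟩ := exists_free_right (hbip.induce S) hC
        (fun u hu => ⟨hTB (hsub _ hT hu), hselS hu⟩) hcard
      have hvA : v ∉ G.A := Set.disjoint_right.mp hbip.1 hvB
      exact ⟨u, hselS hu, fun h => absurd h hvA, fun _ => hTB (hsub _ hT hu),
        (hsub _ hT hu).2, fun h => absurd h hvS, fun _ h => absurd h hvA,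
        fun _ _ => hfree, fun _ _ => hmult⟩

end BCE
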